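/- For every integer n with 4 ≤ n ≤ 6 and every integer d ≥ 2, there exists an elastic collision system of n unit balls in ℝ^d on the time interval ℝ whose number of collisions is at least 1 + n(n−1)/2. (Hence K(n,d) ≥ K(n,2) ≥ 1 + n(n−1)/2.) -/

import Mathlib

open scoped RealInnerProductSpace

noncomputable section

/-- An elastic collision system of unit balls in `ℝ^d`, indexed by `ι`, on the time
interval `I ⊆ ℝ`.  `x i` is the trajectory of the center of ball `i`, `vr i t` its right
derivative (velocity) at time `t` and `vl i t` its left derivative (which, for a
continuous piecewise linear trajectory, is the left limit of the right derivative).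
Fields `right_lin` and `left_lin` say that each trajectory is (locally) linear to the
right and to the left of every time, with the indicated one-sided derivatives; this
encodes continuity and piecewise linearity with locally finitely many breakpoints.
`dist_ge` says the closed unit balls have disjoint interiors, and `collision_rule` is
the elastic collision rule: whenever the right derivative of `x i` changes at a time `t`
(having a left limit in `I`), there is exactly one `j ≠ i` with `‖x i t - x j t‖ = 2`,
the velocity of `x j` also changes at `t`, no other velocity changes at `t`, and with
`u = (x i t - x j t)/2` the usual exchange of normal velocity components holds. -/
structure BallSystem (ι : Type) (d : ℕ) (I : Set ℝ) where
  x : ι → ℝ → EuclideanSpace ℝ (Fin d)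
  vr : ι → ℝ → EuclideanSpace ℝ (Fin d)
  vl : ι → ℝ → EuclideanSpace ℝ (Fin d)
  right_lin : ∀ i, ∀ t ∈ I, ∃ ε > 0, ∀ s ∈ Set.Icc t (t + ε) ∩ I,
    x i s = x i t + (s - t) • vr i t
  left_lin : ∀ i, ∀ t ∈ I, ∃ ε > 0, ∀ s ∈ Set.Icc (t - ε) t ∩ I,
    x i s = x i t + (s - t) • vl i t
  dist_ge : ∀ i j, i ≠ j → ∀ t ∈ I, 2 ≤ ‖x i t - x j t‖
  collision_rule : ∀ i, ∀ t ∈ I, (∃ s ∈ I, s < t) → vr i t ≠ vl i t →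
    ∃ j, j ≠ i ∧ ‖x i t - x j t‖ = 2 ∧ vr j t ≠ vl j t ∧
      (∀ k, k ≠ i → ‖x i t - x k t‖ = 2 → k = j) ∧
      (∀ k, k ≠ i → k ≠ j → vr k t = vl k t) ∧
      vr i t = vl i t -
        ⟪vl i t - vl j t, (2⁻¹ : ℝ) • (x i t - x j t)⟫ • ((2⁻¹ : ℝ) • (x i t - x j t)) ∧
      vr j t = vl j t +
        ⟪vl i t - vl j t, (2⁻¹ : ℝ) • (x i t - x j t)⟫ • ((2⁻¹ : ℝ) • (x i t - x j t))

/-- The set of collisions of the system: pairs `(t, {i,j})` such that at time `t` the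
balls `i` and `j` are tangent and both of their velocities change at `t`. -/
def BallSystem.collisions {ι : Type} [DecidableEq ι] {d : ℕ} {I : Set ℝ}
    (S : BallSystem ι d I) : Set (ℝ × Finset ι) :=
  {p | p.1 ∈ I ∧ (∃ s ∈ I, s < p.1) ∧ ∃ i j : ι, i ≠ j ∧ p.2 = {i, j} ∧
    ‖S.x i p.1 - S.x j p.1‖ = 2 ∧ S.vr i p.1 ≠ S.vl i p.1 ∧ S.vr j p.1 ≠ S.vl j p.1}

/-- `n1 = ⌊n/3⌋`. -/
def nOne (n : ℕ) : ℕ := n / 3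

/-- `n2 = n - 2 n1`. -/
def nTwo (n : ℕ) : ℕ := n - 2 * (n / 3)

/-- `f(n) = n1 (n1+1) n2 + n2 (n2-1)/2 + n1 (n1-1)`. -/
def f (n : ℕ) : ℕ :=
  nOne n * (nOne n + 1) * nTwo n + nTwo n * (nTwo n - 1) / 2 + nOne n * (nOne n - 1)

end

/-!
The systems are explicit: planar initial data found numerically produce the required collisions,
and a planar system embeds isometrically in every `ℝ^d`. Between collisions the relative motion of
two balls is `z + t • w`, so `‖z + t • w‖ ^ 2` is a convex quadratic polynomial in `t`. Two balls
with `⟪z, w⟫ > 0` move apart from now on, two balls with `⟪z, w⟫ < 0` have been approaching up to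
now, and a negative discriminant of `‖z + t • w‖ ^ 2 - 4` keeps them apart at all times; a sign
change of this polynomial locates a collision. Finitely many strict inequalities therefore determine
the order of the collisions, and they are decided in interval arithmetic, where every contact time
is known only up to a small error.
-/

open Set

section Kinematics

variable {E : Type*} [NormedAddCommGroup E] [InnerProductSpace ℝ E] {z w : E} {r s τ : ℝ}

theorem norm_lt_norm_add_smul (h : 0 < ⟪z, w⟫) (hs : 0 < s) : ‖z‖ < ‖z + s • w‖ := by
  refine lt_of_pow_lt_pow_left₀ 2 (norm_nonneg _) ?_
  rw [norm_add_sq_real, real_inner_smul_right]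
  have := mul_pos hs h
  linarith [sq_nonneg ‖s • w‖]

theorem norm_add_smul_le_norm_add_smul (h : ⟪z + τ • w, w⟫ ≤ 0) (hs : s ≤ τ) :
    ‖z + τ • w‖ ≤ ‖z + s • w‖ := by
  have hz : z + s • w = (z + τ • w) + (s - τ) • w := by module
  refine le_of_sq_le_sq ?_ (norm_nonneg _)
  rw [hz, norm_add_sq_real (z + τ • w), real_inner_smul_right]
  have := mul_nonneg_of_nonpos_of_nonpos (sub_nonpos.2 hs) h
  linarith [sq_nonneg ‖(s - τ) • w‖]

theorem lt_norm_add_smul_of_discrim_neg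
    (h : ⟪z, w⟫ * ⟪z, w⟫ < (⟪z, z⟫ - r ^ 2) * ⟪w, w⟫) (s : ℝ) : r < ‖z + s • w‖ := by
  refine lt_of_pow_lt_pow_left₀ 2 (norm_nonneg _) ?_
  have hw : 0 < ⟪w, w⟫ := by
    refine real_inner_self_nonneg.lt_of_ne fun h₀ ↦ ?_
    rw [← h₀, mul_zero] at h
    exact h.not_ge (mul_self_nonneg _)
  have expand : ‖z + s • w‖ ^ 2 = ⟪z, z⟫ + 2 * s * ⟪z, w⟫ + s ^ 2 * ⟪w, w⟫ := by
    rw [norm_add_sq_real, real_inner_smul_right, norm_smul, mul_pow, Real.norm_eq_abs, sq_abs,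
      real_inner_self_eq_norm_sq, real_inner_self_eq_norm_sq]
    ring
  rw [expand]
  refine lt_of_mul_lt_mul_right ?_ hw.le
  linarith [sq_nonneg (s * ⟪w, w⟫ + ⟪z, w⟫)]

theorem exists_norm_add_smul_eq {p q : ℝ} (hpq : p ≤ q) (hp : r ≤ ‖z + p • w‖)
    (hq : ‖z + q • w‖ ≤ r) : ∃ τ ∈ Icc p q, ‖z + τ • w‖ = r :=
  intermediate_value_Icc' hpq (f := fun τ ↦ ‖z + τ • w‖) (by fun_prop) ⟨hq, hp⟩

theorem inner_add_smul_le_inner_add_smul (hs : s ≤ τ) : ⟪z + s • w, w⟫ ≤ ⟪z + τ • w, w⟫ := by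
  simp only [inner_add_left, real_inner_smul_left]
  gcongr
  exact real_inner_self_nonneg

end Kinematics

section ElasticCollision

variable {E : Type*} [NormedAddCommGroup E] [InnerProductSpace ℝ E]

/-- The momentum exchanged by two unit balls of equal mass that touch, where `z` is their relative
position and `w` their relative velocity. -/
noncomputable def elasticImpulse (z w : E) : E := ⟪w, (2⁻¹ : ℝ) • z⟫ • (2⁻¹ : ℝ) • z

theorem elasticImpulse_neg_neg (z w : E) : elasticImpulse (-z) (-w) = -elasticImpulse z w := by
  simp only [elasticImpulse, smul_neg, inner_neg_neg]

theorem inner_elasticImpulse {z : E} (hz : ‖z‖ = 2) (w : E) : ⟪z, elasticImpulse z w⟫ = ⟪z, w⟫ := by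
  simp only [elasticImpulse, real_inner_smul_right, real_inner_self_eq_norm_sq, hz,
    real_inner_comm z w]
  ring

theorem elasticImpulse_ne_zero {z w : E} (hz : ‖z‖ = 2) (h : ⟪z, w⟫ ≠ 0) :
    elasticImpulse z w ≠ 0 := by
  intro h₀
  rw [← inner_elasticImpulse hz, h₀, inner_zero_right] at h
  exact h rfl

variable {ι : Type*}

/-- The centers `x` belong to unit balls with disjoint interiors. -/
def Separated (x : ι → E) : Prop := Pairwise fun i j ↦ 2 ≤ ‖x i - x j‖

/-- The change of the velocities of the balls at `x` from `v` to `v₁` is, as seen from the ball `i`,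
an elastic collision with the only ball that it touches. -/
def HasCollisionPartner (x v v₁ : ι → E) (i : ι) : Prop :=
  ∃ j, j ≠ i ∧ ‖x i - x j‖ = 2 ∧ v₁ j ≠ v j ∧
    (∀ k, k ≠ i → ‖x i - x k‖ = 2 → k = j) ∧ (∀ k, k ≠ i → k ≠ j → v₁ k = v k) ∧
    v₁ i = v i - elasticImpulse (x i - x j) (v i - v j) ∧
    v₁ j = v j + elasticImpulse (x i - x j) (v i - v j)

/-- The collision rule of `BallSystem` at one instant: balls at the positions `x` change their
velocities from `v` to `v₁` in at most one elastic collision. -/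
def IsElasticJump (x v v₁ : ι → E) : Prop := ∀ i, v₁ i ≠ v i → HasCollisionPartner x v v₁ i

theorem isElasticJump_self (x v : ι → E) : IsElasticJump x v v := fun _ h ↦ absurd rfl h

theorem add_smul_sub_add_smul (x v : ι → E) (s : ℝ) (k l : ι) :
    (x + s • v) k - (x + s • v) l = (x k - x l) + s • (v k - v l) := by
  simp only [Pi.add_apply, Pi.smul_apply]
  module

theorem separated_add_smul_of_collision {x v : ι → E} {i j : ι} {τ : ℝ} (hx : Separated x)
    (htouch : ‖(x i - x j) + τ • (v i - v j)‖ = 2)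
    (happroach : ⟪(x i - x j) + τ • (v i - v j), v i - v j⟫ ≤ 0)
    (hclear : ∀ k l, k ≠ l → s(k, l) ≠ s(i, j) →
      ∀ s ∈ Ioc 0 τ, 2 < ‖(x k - x l) + s • (v k - v l)‖) :
    ∀ s ∈ Icc 0 τ, Separated (x + s • v) := by
  intro s hs k l hkl
  rw [add_smul_sub_add_smul]
  have hcolliding : 2 ≤ ‖(x i - x j) + s • (v i - v j)‖ :=
    htouch ▸ norm_add_smul_le_norm_add_smul happroach hs.2
  obtain rfl | hs₀ := hs.1.eq_or_lt
  · rw [zero_smul, add_zero]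
    exact hx hkl
  by_cases heq : s(k, l) = s(i, j)
  · obtain ⟨rfl, rfl⟩ | ⟨rfl, rfl⟩ := Sym2.eq_iff.1 heq
    · exact hcolliding
    · rwa [← neg_sub (x l), ← neg_sub (v l), smul_neg, ← neg_add, norm_neg]
  · exact (hclear k l hkl heq s ⟨hs₀, hs.2⟩).le

variable [DecidableEq ι]

/-- The velocities after an elastic collision of the balls `i` and `j`. -/
noncomputable def elasticUpdate (i j : ι) (x v : ι → E) (k : ι) : E :=
  if k = i then v i - elasticImpulse (x i - x j) (v i - v j)
  else if k = j then v j + elasticImpulse (x i - x j) (v i - v j)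
  else v k

variable {i j : ι} {x v : ι → E}

theorem elasticUpdate_left :
    elasticUpdate i j x v i = v i - elasticImpulse (x i - x j) (v i - v j) :=
  if_pos rfl

theorem elasticUpdate_right (hij : i ≠ j) :
    elasticUpdate i j x v j = v j + elasticImpulse (x i - x j) (v i - v j) := by
  rw [elasticUpdate, if_neg hij.symm, if_pos rfl]

theorem elasticUpdate_of_ne {k : ι} (hi : k ≠ i) (hj : k ≠ j) : elasticUpdate i j x v k = v k := by
  rw [elasticUpdate, if_neg hi, if_neg hj]

theorem elasticUpdate_comm (hij : i ≠ j) : elasticUpdate i j x v = elasticUpdate j i x v := by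
  have hJ : elasticImpulse (x j - x i) (v j - v i) = -elasticImpulse (x i - x j) (v i - v j) := by
    rw [← elasticImpulse_neg_neg, neg_sub, neg_sub]
  ext1 k
  unfold elasticUpdate
  split_ifs with hi hj
  · exact absurd (hi.symm.trans hj) hij
  · rw [hJ, sub_eq_add_neg]
  · rw [hJ, sub_neg_eq_add]
  · rfl

theorem elasticUpdate_left_ne (htouch : ‖x i - x j‖ = 2) (h : ⟪x i - x j, v i - v j⟫ ≠ 0) :
    elasticUpdate i j x v i ≠ v i := by
  rw [elasticUpdate_left, ne_eq, sub_eq_self]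
  exact elasticImpulse_ne_zero htouch h

theorem elasticUpdate_right_ne (hij : i ≠ j) (htouch : ‖x i - x j‖ = 2)
    (h : ⟪x i - x j, v i - v j⟫ ≠ 0) : elasticUpdate i j x v j ≠ v j := by
  rw [elasticUpdate_right hij, ne_eq, add_eq_left]
  exact elasticImpulse_ne_zero htouch h

theorem inner_elasticUpdate_sub (hij : i ≠ j) (htouch : ‖x i - x j‖ = 2) :
    ⟪x i - x j, elasticUpdate i j x v i - elasticUpdate i j x v j⟫ =
      -⟪x i - x j, v i - v j⟫ := by
  have hw : elasticUpdate i j x v i - elasticUpdate i j x v j =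
      (v i - v j) - (2 : ℝ) • elasticImpulse (x i - x j) (v i - v j) := by
    rw [elasticUpdate_left, elasticUpdate_right hij]
    module
  rw [hw, inner_sub_right, real_inner_smul_right, inner_elasticImpulse htouch]
  ring

theorem hasCollisionPartner_elasticUpdate (hij : i ≠ j) (htouch : ‖x i - x j‖ = 2)
    (h : ⟪x i - x j, v i - v j⟫ ≠ 0) (honly : ∀ k, k ≠ i → ‖x i - x k‖ = 2 → k = j) :
    HasCollisionPartner x v (elasticUpdate i j x v) i :=
  ⟨j, hij.symm, htouch, elasticUpdate_right_ne hij htouch h, honly, fun _ ↦ elasticUpdate_of_ne,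
    elasticUpdate_left, elasticUpdate_right hij⟩

theorem isElasticJump_elasticUpdate (hij : i ≠ j) (htouch : ‖x i - x j‖ = 2)
    (h : ⟪x i - x j, v i - v j⟫ ≠ 0)
    (honly : ∀ k l, k ≠ l → ‖x k - x l‖ = 2 → s(k, l) = s(i, j)) :
    IsElasticJump x v (elasticUpdate i j x v) := by
  intro k hk
  by_cases hki : k = i
  · subst hki
    exact hasCollisionPartner_elasticUpdate hij htouch h
      fun l hl hkl ↦ Sym2.congr_right.1 (honly k l hl.symm hkl)
  by_cases hkj : k = j
  · subst hkj
    rw [elasticUpdate_comm hij]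
    refine hasCollisionPartner_elasticUpdate hij.symm (by rwa [norm_sub_rev]) ?_
      fun l hl hkl ↦ Sym2.congr_right.1 ((honly k l hl.symm hkl).trans Sym2.eq_swap)
    rwa [← neg_sub (x i), ← neg_sub (v i), inner_neg_neg]
  · exact absurd (elasticUpdate_of_ne hki hkj) hk

end ElasticCollision

namespace BallSystem

section Constructions

variable {ι : Type} {d d' : ℕ} {I J : Set ℝ} {t₁ : ℝ}

/-- The image of a system of balls under a linear isometry of the ambient space. -/
noncomputable def map (L : EuclideanSpace ℝ (Fin d) →ₗᵢ[ℝ] EuclideanSpace ℝ (Fin d'))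
    (S : BallSystem ι d I) : BallSystem ι d' I where
  x i t := L (S.x i t)
  vr i t := L (S.vr i t)
  vl i t := L (S.vl i t)
  right_lin i t ht := by
    obtain ⟨ε, hε, H⟩ := S.right_lin i t ht
    exact ⟨ε, hε, fun s hs ↦ by rw [H s hs, map_add, map_smul]⟩
  left_lin i t ht := by
    obtain ⟨ε, hε, H⟩ := S.left_lin i t ht
    exact ⟨ε, hε, fun s hs ↦ by rw [H s hs, map_add, map_smul]⟩
  dist_ge i j hij t ht := by
    rw [← map_sub, L.norm_map]
    exact S.dist_ge i j hij t ht
  collision_rule i t ht hpast hne := by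
    simp only [← map_sub, ← map_add, ← map_smul, L.inner_map_map, L.norm_map, ne_eq,
      L.injective.eq_iff] at hne ⊢
    exact S.collision_rule i t ht hpast hne

theorem collisions_map [DecidableEq ι]
    (L : EuclideanSpace ℝ (Fin d) →ₗᵢ[ℝ] EuclideanSpace ℝ (Fin d')) (S : BallSystem ι d I) :
    (S.map L).collisions = S.collisions := by
  simp only [collisions, map, ← map_sub, L.norm_map, ne_eq, L.injective.eq_iff]

/-- The system whose balls move with the constant velocities `v` and are at `x` at the time `t₁`. -/
noncomputable def uniformMotion (x v : ι → EuclideanSpace ℝ (Fin d)) (t₁ : ℝ) (I : Set ℝ)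
    (hsep : ∀ t ∈ I, Separated (x + (t - t₁) • v)) : BallSystem ι d I where
  x i t := x i + (t - t₁) • v i
  vr i _ := v i
  vl i _ := v i
  right_lin _ _ _ := ⟨1, one_pos, fun _ _ ↦ by module⟩
  left_lin _ _ _ := ⟨1, one_pos, fun _ _ ↦ by module⟩
  dist_ge _ _ hij t ht := hsep t ht hij
  collision_rule _ _ _ _ hne := absurd rfl hne

variable (S : BallSystem ι d (Ici t₁)) (v : ι → EuclideanSpace ℝ (Fin d)) (J : Set ℝ)
  (hsep : ∀ t ∈ J, t ≤ t₁ → Separated ((fun i ↦ S.x i t₁) + (t - t₁) • v))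
  (hjump : IsElasticJump (fun i ↦ S.x i t₁) v fun i ↦ S.vr i t₁)

/-- The system on `J` that moves with the constant velocities `v` up to the time `t₁` and
continues as `S` afterwards. -/
noncomputable def prepend : BallSystem ι d J where
  x i t := if t ≤ t₁ then S.x i t₁ + (t - t₁) • v i else S.x i t
  vr i t := if t < t₁ then v i else S.vr i t
  vl i t := if t ≤ t₁ then v i else S.vl i t
  right_lin i t _ := by
    rcases lt_or_ge t t₁ with h | h
    · refine ⟨t₁ - t, sub_pos.2 h, fun s hs ↦ ?_⟩
      have hs₁ : s ≤ t₁ := by linarith [hs.1.2]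
      simp only [hs₁, h, h.le, if_true]
      module
    · obtain ⟨ε, hε, H⟩ := S.right_lin i t h
      refine ⟨ε, hε, fun s hs ↦ ?_⟩
      have position_eq : ∀ r, t₁ ≤ r →
          (if r ≤ t₁ then S.x i t₁ + (r - t₁) • v i else S.x i r) = S.x i r := by
        intro r hr
        split_ifs with hr₁
        · obtain rfl : r = t₁ := le_antisymm hr₁ hr
          rw [sub_self, zero_smul, add_zero]
        · rfl
      rw [position_eq s (h.trans hs.1.1), position_eq t h, if_neg h.not_gt]
      exact H s ⟨hs.1, h.trans hs.1.1⟩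
  left_lin i t _ := by
    rcases le_or_gt t t₁ with h | h
    · refine ⟨1, one_pos, fun s hs ↦ ?_⟩
      simp only [hs.1.2.trans h, h, if_true]
      module
    · obtain ⟨ε, hε, H⟩ := S.left_lin i t h.le
      refine ⟨min ε ((t - t₁) / 2), lt_min hε (by linarith), fun s hs ↦ ?_⟩
      have hs₁ : t₁ < s := by linarith [hs.1.1, min_le_right ε ((t - t₁) / 2)]
      simp only [hs₁.not_ge, h.not_ge, if_false]
      exact H s ⟨⟨by linarith [hs.1.1, min_le_left ε ((t - t₁) / 2)], hs.1.2⟩, hs₁.le⟩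
  dist_ge i j hij t ht := by
    rcases le_or_gt t t₁ with h | h
    · simp only [h, if_true]
      exact hsep t ht h hij
    · simp only [h.not_ge, if_false]
      exact S.dist_ge i j hij t h.le
  collision_rule i t _ _ hne := by
    rcases lt_trichotomy t t₁ with h | rfl | h
    · simp only [h, h.le, if_true, ne_eq, not_true_eq_false] at hne
    · simp only [le_refl, lt_irrefl, if_true, if_false, sub_self, zero_smul, add_zero] at hne ⊢
      exact hjump i hne
    · simp only [h.not_ge, h.not_gt, if_false] at hne ⊢
      exact S.collision_rule i t h.le ⟨t₁, self_mem_Ici, h⟩ hne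

variable {J}

theorem prepend_x_of_le {t : ℝ} (ht : t ≤ t₁) (i : ι) :
    (S.prepend v J hsep hjump).x i t = S.x i t₁ + (t - t₁) • v i :=
  if_pos ht

theorem prepend_vr_of_lt {t : ℝ} (ht : t < t₁) (i : ι) :
    (S.prepend v J hsep hjump).vr i t = v i :=
  if_pos ht

variable [DecidableEq ι]

theorem collisions_subset_prepend (hJ : Ici t₁ ⊆ J) :
    S.collisions ⊆ (S.prepend v J hsep hjump).collisions := by
  rintro ⟨t, P⟩ ⟨ht, ⟨s, hs, hst⟩, i, j, hij, hP, H⟩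
  have h : t₁ < t := lt_of_le_of_lt hs hst
  refine ⟨hJ ht, ⟨s, hJ hs, hst⟩, i, j, hij, hP, ?_⟩
  simpa only [prepend, h.not_ge, h.not_gt, if_false] using H

theorem initial_time_notMem_collisions (P : Finset ι) : (t₁, P) ∉ S.collisions :=
  fun ⟨_, ⟨_, hs, hst⟩, _⟩ ↦ hst.not_ge hs

variable {S v hsep hjump} in
theorem mem_collisions_prepend {t₀ : ℝ} {i j : ι} (ht₁ : t₁ ∈ J) (ht₀ : t₀ ∈ J) (h : t₀ < t₁)
    (hij : i ≠ j) (htouch : ‖S.x i t₁ - S.x j t₁‖ = 2) (hi : S.vr i t₁ ≠ v i)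
    (hj : S.vr j t₁ ≠ v j) : (t₁, {i, j}) ∈ (S.prepend v J hsep hjump).collisions := by
  refine ⟨ht₁, ⟨t₀, ht₀, h⟩, i, j, hij, rfl, ?_⟩
  simpa only [prepend, le_refl, lt_irrefl, if_true, if_false, sub_self, zero_smul, add_zero]
    using ⟨htouch, hi, hj⟩

end Constructions

end BallSystem

section Continuation

variable {ι : Type} [DecidableEq ι] {d N : ℕ} {x v : ι → EuclideanSpace ℝ (Fin d)} {t₀ : ℝ}

/-- Unit balls that start at the time `t₀` at the positions `x` with the velocities `v` can move
forever after, with at least `N` collisions. -/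
def HasContinuation (x v : ι → EuclideanSpace ℝ (Fin d)) (t₀ : ℝ) (N : ℕ) : Prop :=
  ∃ S : BallSystem ι d (Ici t₀), (fun i ↦ S.x i t₀) = x ∧ (fun i ↦ S.vr i t₀) = v ∧
    (N : ℕ∞) ≤ S.collisions.encard

namespace HasContinuation

theorem of_separated (hsep : ∀ s ≥ (0 : ℝ), Separated (x + s • v)) : HasContinuation x v t₀ 0 := by
  refine ⟨.uniformMotion x v t₀ _ fun t ht ↦ hsep _ (sub_nonneg.2 ht), ?_, rfl, zero_le⟩
  simp only [BallSystem.uniformMotion, sub_self, zero_smul, add_zero]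

theorem of_jump {t₁ : ℝ} {v₁ : ι → EuclideanSpace ℝ (Fin d)} {i j : ι} (ht : t₀ < t₁)
    (hcont : HasContinuation (x + (t₁ - t₀) • v) v₁ t₁ N)
    (hsep : ∀ s ∈ Icc 0 (t₁ - t₀), Separated (x + s • v))
    (hjump : IsElasticJump (x + (t₁ - t₀) • v) v v₁) (hij : i ≠ j)
    (htouch : ‖(x + (t₁ - t₀) • v) i - (x + (t₁ - t₀) • v) j‖ = 2)
    (hi : v₁ i ≠ v i) (hj : v₁ j ≠ v j) : HasContinuation x v t₀ (N + 1) := by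
  obtain ⟨S, hx, rfl, hN⟩ := hcont
  have hpos (t : ℝ) : (fun i ↦ S.x i t₁) + (t - t₁) • v = x + (t - t₀) • v := by
    rw [hx]
    module
  rw [← hx] at hjump htouch
  have hsep₀ : ∀ t ∈ Ici t₀, t ≤ t₁ → Separated ((fun i ↦ S.x i t₁) + (t - t₁) • v) := by
    intro t ht₀ ht₁
    rw [hpos]
    exact hsep _ ⟨sub_nonneg.2 ht₀, by gcongr⟩
  refine ⟨S.prepend v (Ici t₀) hsep₀ hjump, ?_, ?_, ?_⟩
  · ext1 i
    rw [S.prepend_x_of_le v hsep₀ hjump ht.le]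
    simpa using congrFun (hpos t₀) i
  · exact funext fun i ↦ S.prepend_vr_of_lt v hsep₀ hjump ht i
  · calc ((N + 1 : ℕ) : ℕ∞) ≤ S.collisions.encard + 1 := by
          push_cast
          gcongr
      _ = (insert (t₁, {i, j}) S.collisions).encard :=
          (encard_insert_of_notMem (S.initial_time_notMem_collisions _)).symm
      _ ≤ _ := encard_le_encard <| insert_subset
          (BallSystem.mem_collisions_prepend ht.le self_mem_Ici ht hij htouch hi hj)
          (S.collisions_subset_prepend v hsep₀ hjump (Ici_subset_Ici.2 ht.le))

theorem of_collision {i j : ι} {τ : ℝ} (hij : i ≠ j) (hτ : 0 < τ)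
    (hcont : HasContinuation (x + τ • v) (elasticUpdate i j (x + τ • v) v) (t₀ + τ) N)
    (hx : Separated x) (htouch : ‖(x i - x j) + τ • (v i - v j)‖ = 2)
    (happroach : ⟪(x i - x j) + τ • (v i - v j), v i - v j⟫ < 0)
    (hclear : ∀ k l, k ≠ l → s(k, l) ≠ s(i, j) →
      ∀ s ∈ Ioc 0 τ, 2 < ‖(x k - x l) + s • (v k - v l)‖) :
    HasContinuation x v t₀ (N + 1) := by
  have hsep := separated_add_smul_of_collision hx htouch happroach.le hclear
  rw [← add_smul_sub_add_smul] at htouch happroach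
  have honly : ∀ k l, k ≠ l → ‖(x + τ • v) k - (x + τ • v) l‖ = 2 → s(k, l) = s(i, j) := by
    intro k l hkl h
    by_contra hne
    rw [add_smul_sub_add_smul] at h
    exact (hclear k l hkl hne τ ⟨hτ, le_rfl⟩).ne' h
  have hjump := isElasticJump_elasticUpdate hij htouch happroach.ne honly
  have hi := elasticUpdate_left_ne htouch happroach.ne
  have hj := elasticUpdate_right_ne hij htouch happroach.ne
  rw [← add_sub_cancel_left t₀ τ] at hsep htouch
  refine of_jump (lt_add_of_pos_right t₀ hτ) ?_ hsep ?_ hij htouch hi hj <;>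
    rwa [add_sub_cancel_left]

theorem exists_ballSystem_univ (hcont : HasContinuation x v 0 N)
    (hpast : ∀ s ≤ (0 : ℝ), Separated (x + s • v)) :
    ∃ S : BallSystem ι d univ, (N : ℕ∞) ≤ S.collisions.encard := by
  obtain ⟨S, rfl, rfl, hN⟩ := hcont
  refine ⟨S.prepend (fun i ↦ S.vr i 0) univ ?_ (isElasticJump_self _ _),
    hN.trans (encard_le_encard (S.collisions_subset_prepend _ _ _ (subset_univ _)))⟩
  intro t _ ht
  rw [sub_zero]
  exact hpast t ht

end HasContinuation

end Continuation

section FixedPoint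

theorem abs_div_sub_ediv_le_one (z : ℤ) (m : ℕ) : |(z / m : ℝ) - (z / m : ℤ)| ≤ 1 := by
  have hfloor : ⌊(z / m : ℝ)⌋ = z / m := by
    rw [← Rat.floor_intCast_div_natCast, ← Rat.floor_cast (α := ℝ)]
    push_cast
    rfl
  rw [← hfloor, Int.self_sub_floor, abs_of_nonneg (Int.fract_nonneg _)]
  exact (Int.fract_lt_one _).le

theorem abs_mul_sub_mul_le {p q m n ε δ : ℝ} (hp : |p - m| ≤ ε) (hq : |q - n| ≤ δ) :
    |p * q - m * n| ≤ |m| * δ + |n| * ε + ε * δ := by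
  have hε : 0 ≤ ε := (abs_nonneg _).trans hp
  calc |p * q - m * n| = |m * (q - n) + n * (p - m) + (p - m) * (q - n)| := by ring_nf
    _ ≤ |m| * |q - n| + |n| * |p - m| + |p - m| * |q - n| := by
        simpa only [abs_mul] using
          abs_add_three (m * (q - n)) (n * (p - m)) ((p - m) * (q - n))
    _ ≤ _ := by gcongr

/-- An interval of real numbers in fixed-point arithmetic: it consists of the reals `r` for which
`r * s` differs from `mid` by at most `rad`. -/
@[ext]
structure FixedInterval (s : ℕ) where
  mid : ℤ
  rad : ℕ

namespace FixedInterval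

variable {s : ℕ}

instance : Membership ℝ (FixedInterval s) := ⟨fun a r ↦ |r * s - a.mid| ≤ a.rad⟩

instance : Add (FixedInterval s) := ⟨fun a b ↦ ⟨a.mid + b.mid, a.rad + b.rad⟩⟩

instance : Sub (FixedInterval s) := ⟨fun a b ↦ ⟨a.mid - b.mid, a.rad + b.rad⟩⟩

-- The summand `2` absorbs the rounding errors of the two integer divisions.
instance : Mul (FixedInterval s) := ⟨fun a b ↦
  ⟨a.mid * b.mid / s, (a.mid.natAbs * b.rad + b.mid.natAbs * a.rad + a.rad * b.rad) / s + 2⟩⟩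

instance : NatCast (FixedInterval s) := ⟨fun m ↦ ⟨m * s, 0⟩⟩

instance : Zero (FixedInterval s) := ⟨⟨0, 0⟩⟩

instance : AddCommMonoid (FixedInterval s) where
  add_assoc _ _ _ := FixedInterval.ext (add_assoc ..) (add_assoc ..)
  add_comm _ _ := FixedInterval.ext (add_comm ..) (add_comm ..)
  zero_add _ := FixedInterval.ext (zero_add _) (zero_add _)
  add_zero _ := FixedInterval.ext (add_zero _) (add_zero _)
  nsmul := nsmulRec

instance : LT (FixedInterval s) := ⟨fun a b ↦ a.mid + a.rad < b.mid - b.rad⟩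

instance (a b : FixedInterval s) : Decidable (a < b) := Int.decLt _ _

/-- An interval that contains `1 / 2`; it has to be thick, as `s` may be odd. -/
def half : FixedInterval s := ⟨s / 2, 1⟩

/-- The left endpoint of an interval, as a degenerate interval. -/
def lower (a : FixedInterval s) : FixedInterval s := ⟨a.mid - a.rad, 0⟩

/-- The right endpoint of an interval, as a degenerate interval. -/
def upper (a : FixedInterval s) : FixedInterval s := ⟨a.mid + a.rad, 0⟩

variable {a b : FixedInterval s} {p q r : ℝ}

theorem mem_def : r ∈ a ↔ |r * s - a.mid| ≤ a.rad := Iff.rfl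

theorem natCast_mem (m : ℕ) : (m : ℝ) ∈ (m : FixedInterval s) := by
  change |(m : ℝ) * s - ((m * s : ℤ) : ℝ)| ≤ (0 : ℕ)
  push_cast
  rw [sub_self, abs_zero]

theorem zero_mem : (0 : ℝ) ∈ (0 : FixedInterval s) := by
  change |(0 : ℝ) * s - ((0 : ℤ) : ℝ)| ≤ (0 : ℕ)
  simp

theorem half_mem : (2⁻¹ : ℝ) ∈ (half : FixedInterval s) := by
  change |(2⁻¹ : ℝ) * s - ((s / 2 : ℤ) : ℝ)| ≤ (1 : ℕ)
  rw [inv_mul_eq_div]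
  simpa using abs_div_sub_ediv_le_one s 2

theorem add_mem (hp : p ∈ a) (hq : q ∈ b) : p + q ∈ a + b := by
  rw [mem_def] at hp hq
  change |(p + q) * s - ((a.mid + b.mid : ℤ) : ℝ)| ≤ (a.rad + b.rad : ℕ)
  push_cast
  rw [add_mul, add_sub_add_comm]
  exact (abs_add_le _ _).trans (add_le_add hp hq)

theorem sub_mem (hp : p ∈ a) (hq : q ∈ b) : p - q ∈ a - b := by
  rw [mem_def] at hp hq
  change |(p - q) * s - ((a.mid - b.mid : ℤ) : ℝ)| ≤ (a.rad + b.rad : ℕ)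
  push_cast
  rw [sub_mul, sub_sub_sub_comm]
  exact (abs_sub _ _).trans (add_le_add hp hq)

theorem mul_mem (hp : p ∈ a) (hq : q ∈ b) : p * q ∈ a * b := by
  rw [mem_def] at hp hq
  set m := a.mid * b.mid
  set e := a.mid.natAbs * b.rad + b.mid.natAbs * a.rad + a.rad * b.rad with he
  change |p * q * s - ((m / s : ℤ) : ℝ)| ≤ (e / s + 2 : ℕ)
  have hscale : p * q * s = p * s * (q * s) / s := by
    rcases eq_or_ne (s : ℝ) 0 with h | h
    · simp [h]
    · field_simp
  have hexact : |p * q * s - (m / s : ℝ)| ≤ e / s := by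
    rw [hscale, ← sub_div, abs_div, Nat.abs_cast]
    gcongr
    simpa [m, he, Nat.cast_natAbs] using abs_mul_sub_mul_le hp hq
  have hround : (e / s : ℝ) ≤ (e / s : ℕ) + 1 := by
    rw [← Nat.floor_div_eq_div (K := ℝ)]
    exact (Nat.lt_floor_add_one _).le
  have := abs_sub_le (p * q * s) (m / s) (m / s : ℤ)
  push_cast
  linarith [abs_div_sub_ediv_le_one m s]

theorem sum_mem {κ : Type*} {J : Finset κ} {a : κ → FixedInterval s} {r : κ → ℝ}
    (h : ∀ k ∈ J, r k ∈ a k) : ∑ k ∈ J, r k ∈ ∑ k ∈ J, a k := by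
  classical
  induction J using Finset.induction_on with
  | empty => exact zero_mem
  | insert k J hk ih =>
    rw [Finset.sum_insert hk, Finset.sum_insert hk]
    exact add_mem (h k (Finset.mem_insert_self k J))
      (ih fun l hl ↦ h l (Finset.mem_insert_of_mem hl))

theorem inner_mem_dotProduct {κ : Type*} [Fintype κ] {a b : κ → FixedInterval s}
    {z w : EuclideanSpace ℝ κ} (hz : ∀ k, z k ∈ a k) (hw : ∀ k, w k ∈ b k) :
    ⟪z, w⟫ ∈ a ⬝ᵥ b := by
  simp only [PiLp.inner_apply, RCLike.inner_apply, conj_trivial, mul_comm (w _)]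
  exact sum_mem fun k _ ↦ mul_mem (hz k) (hw k)

theorem lt_of_lt (hp : p ∈ a) (hq : q ∈ b) (h : a < b) : p < q := by
  have hgap : (a.mid + a.rad : ℝ) < b.mid - b.rad := by exact_mod_cast h
  refine lt_of_mul_lt_mul_right ?_ (Nat.cast_nonneg s)
  linarith [(abs_sub_le_iff.1 hp).1, (abs_sub_le_iff.1 hq).2]

theorem mem_of_mem_Icc (hp : p ∈ a.lower) (hq : q ∈ a.upper) (hr : r ∈ Icc p q) : r ∈ a := by
  have hp₂ := (abs_sub_le_iff.1 hp).2
  have hq₁ := (abs_sub_le_iff.1 hq).1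
  have hpr := mul_le_mul_of_nonneg_right hr.1 (Nat.cast_nonneg (α := ℝ) s)
  have hrq := mul_le_mul_of_nonneg_right hr.2 (Nat.cast_nonneg (α := ℝ) s)
  simp only [lower, upper, Int.cast_sub, Int.cast_add, Int.cast_natCast, Nat.cast_zero]
    at hp₂ hq₁
  exact abs_sub_le_iff.2 ⟨by linarith, by linarith⟩

variable [NeZero s]

theorem exists_mem (a : FixedInterval s) : ∃ r : ℝ, r ∈ a := by
  refine ⟨a.mid / s, ?_⟩
  rw [mem_def, div_mul_cancel₀ _ (NeZero.ne (s : ℝ)), sub_self, abs_zero]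
  exact Nat.cast_nonneg _

theorem le_of_mem_lower_of_mem_upper (hp : p ∈ a.lower) (hq : q ∈ a.upper) : p ≤ q := by
  have hp₁ := (abs_sub_le_iff.1 hp).1
  have hq₂ := (abs_sub_le_iff.1 hq).2
  simp only [lower, upper, Int.cast_sub, Int.cast_add, Int.cast_natCast, Nat.cast_zero]
    at hp₁ hq₂
  refine le_of_mul_le_mul_right ?_ (Nat.cast_pos'.2 (NeZero.pos s))
  linarith [Nat.cast_nonneg (α := ℝ) a.rad]

end FixedInterval

end FixedPoint

section PhaseBox

/-- Enclosures of the coordinates of a position and of a velocity in `ℝ^d`. -/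
structure PhaseBox (s d : ℕ) where
  pos : Fin d → FixedInterval s
  vel : Fin d → FixedInterval s

namespace PhaseBox

variable {s d : ℕ}

instance : Sub (PhaseBox s d) := ⟨fun a b ↦ ⟨a.pos - b.pos, a.vel - b.vel⟩⟩

/-- The enclosure after a motion with constant velocity during a time in `t`. -/
def advance (t : FixedInterval s) (a : PhaseBox s d) : PhaseBox s d := ⟨a.pos + t • a.vel, a.vel⟩

/-- The enclosure of `elasticImpulse` for the relative motions in `a`. -/
def impulse (a : PhaseBox s d) : Fin d → FixedInterval s :=
  (a.vel ⬝ᵥ ((.half : FixedInterval s) • a.pos)) • ((.half : FixedInterval s) • a.pos)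

/-- The position `z` and the velocity `w` lie in the box `a`. -/
def Encloses (a : PhaseBox s d) (z w : EuclideanSpace ℝ (Fin d)) : Prop :=
  (∀ k, z k ∈ a.pos k) ∧ ∀ k, w k ∈ a.vel k

/-- Two balls with relative motion in `a` are moving away from each other. -/
abbrev Recedes (a : PhaseBox s d) : Prop := 0 < a.pos ⬝ᵥ a.vel

/-- Two balls with relative motion in `a` are apart and are moving towards each other. -/
abbrev Approaches (a : PhaseBox s d) : Prop := 4 < a.pos ⬝ᵥ a.pos ∧ a.pos ⬝ᵥ a.vel < 0

/-- The discriminant of `‖z + t • w‖ ^ 2 - 4`, a quadratic polynomial in `t`, is negative for the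
relative motions in `a`. -/
abbrev Misses (a : PhaseBox s d) : Prop :=
  (a.pos ⬝ᵥ a.vel) * (a.pos ⬝ᵥ a.vel) < (a.pos ⬝ᵥ a.pos - 4) * (a.vel ⬝ᵥ a.vel)

/-- Two balls with relative motion in `a` come into contact while they approach each other, after
a positive time in `t`. -/
abbrev Meets (a : PhaseBox s d) (t : FixedInterval s) : Prop :=
  0 < t ∧ 4 < (a.advance t.lower).pos ⬝ᵥ (a.advance t.lower).pos ∧
    (a.advance t.upper).pos ⬝ᵥ (a.advance t.upper).pos < 4 ∧
    (a.advance t.upper).pos ⬝ᵥ a.vel < 0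

theorem exists_encloses [NeZero s] (a : PhaseBox s d) : ∃ z w, a.Encloses z w := by
  choose z hz using fun k ↦ (a.pos k).exists_mem
  choose w hw using fun k ↦ (a.vel k).exists_mem
  exact ⟨.toLp 2 z, .toLp 2 w, hz, hw⟩

variable {a b : PhaseBox s d} {t : FixedInterval s} {z w z₁ w₁ : EuclideanSpace ℝ (Fin d)} {τ : ℝ}

namespace Encloses

theorem sub (ha : a.Encloses z w) (hb : b.Encloses z₁ w₁) :
    (a - b).Encloses (z - z₁) (w - w₁) :=
  ⟨fun k ↦ FixedInterval.sub_mem (ha.1 k) (hb.1 k),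
    fun k ↦ FixedInterval.sub_mem (ha.2 k) (hb.2 k)⟩

theorem advance (ha : a.Encloses z w) (hτ : τ ∈ t) : (a.advance t).Encloses (z + τ • w) w :=
  ⟨fun k ↦ FixedInterval.add_mem (ha.1 k) (FixedInterval.mul_mem hτ (ha.2 k)), ha.2⟩

theorem elasticImpulse_mem (ha : a.Encloses z w) (k : Fin d) :
    elasticImpulse z w k ∈ a.impulse k := by
  have hhalf : ∀ k, ((2⁻¹ : ℝ) • z) k ∈ ((.half : FixedInterval s) • a.pos) k :=
    fun k ↦ FixedInterval.mul_mem FixedInterval.half_mem (ha.1 k)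
  exact FixedInterval.mul_mem (FixedInterval.inner_mem_dotProduct ha.2 hhalf) (hhalf k)

theorem inner_lt_zero (ha : a.Encloses z w) (h : a.pos ⬝ᵥ a.vel < 0) : ⟪z, w⟫ < 0 :=
  FixedInterval.lt_of_lt (FixedInterval.inner_mem_dotProduct ha.1 ha.2) FixedInterval.zero_mem h

theorem norm_lt_two (ha : a.Encloses z w) (h : a.pos ⬝ᵥ a.pos < 4) : ‖z‖ < 2 := by
  have hz := FixedInterval.lt_of_lt (FixedInterval.inner_mem_dotProduct ha.1 ha.1)
    (FixedInterval.natCast_mem 4) h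
  rw [real_inner_self_eq_norm_sq] at hz
  exact lt_of_pow_lt_pow_left₀ 2 zero_le_two (hz.trans_eq (by norm_num))

theorem two_lt_norm (ha : a.Encloses z w) (h : 4 < a.pos ⬝ᵥ a.pos) : 2 < ‖z‖ := by
  have hz := FixedInterval.lt_of_lt (FixedInterval.natCast_mem 4)
    (FixedInterval.inner_mem_dotProduct ha.1 ha.1) h
  rw [real_inner_self_eq_norm_sq] at hz
  exact lt_of_pow_lt_pow_left₀ 2 (norm_nonneg z) (hz.trans_eq' (by norm_num))

theorem inner_pos_of_recedes (ha : a.Encloses z w) (h : a.Recedes) : 0 < ⟪z, w⟫ :=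
  FixedInterval.lt_of_lt FixedInterval.zero_mem (FixedInterval.inner_mem_dotProduct ha.1 ha.2) h

theorem two_lt_norm_add_smul_of_misses (ha : a.Encloses z w) (h : a.Misses) (r : ℝ) :
    2 < ‖z + r • w‖ := by
  have hzz := FixedInterval.inner_mem_dotProduct ha.1 ha.1
  have hzw := FixedInterval.inner_mem_dotProduct ha.1 ha.2
  have hww := FixedInterval.inner_mem_dotProduct ha.2 ha.2
  refine lt_norm_add_smul_of_discrim_neg ?_ r
  convert FixedInterval.lt_of_lt (FixedInterval.mul_mem hzw hzw)
    (FixedInterval.mul_mem (FixedInterval.sub_mem hzz (FixedInterval.natCast_mem 4)) hww) h using 3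
  norm_num

theorem two_lt_norm_add_smul_of_approaches (ha : a.Encloses (z + τ • w) w) (h : a.Approaches)
    {r : ℝ} (hr : r ≤ τ) : 2 < ‖z + r • w‖ :=
  (ha.two_lt_norm h.1).trans_le (norm_add_smul_le_norm_add_smul (ha.inner_lt_zero h.2).le hr)

theorem exists_contact_of_meets [NeZero s] (ha : a.Encloses z w) (h : a.Meets t) :
    ∃ τ : ℝ, τ ∈ t ∧ 0 < τ ∧ ‖z + τ • w‖ = 2 ∧ ⟪z + τ • w, w⟫ < 0 := by
  obtain ⟨ht, hlower, hupper, hradial⟩ := h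
  obtain ⟨p, hp⟩ := t.lower.exists_mem
  obtain ⟨q, hq⟩ := t.upper.exists_mem
  obtain ⟨τ, hτ, hcontact⟩ := exists_norm_add_smul_eq
    (FixedInterval.le_of_mem_lower_of_mem_upper hp hq) ((ha.advance hp).two_lt_norm hlower).le
    ((ha.advance hq).norm_lt_two hupper).le
  have hτt := FixedInterval.mem_of_mem_Icc hp hq hτ
  exact ⟨τ, hτt, FixedInterval.lt_of_lt FixedInterval.zero_mem hτt ht, hcontact,
    (inner_add_smul_le_inner_add_smul hτ.2).trans_lt ((ha.advance hq).inner_lt_zero hradial)⟩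

end Encloses

end PhaseBox

end PhaseBox

section Prediction

variable {s d : ℕ} {ι : Type*}

/-- The next collision of a system of balls: it involves `i` and `j` and happens after a waiting
time in `wait`. -/
structure Event (s : ℕ) (ι : Type*) where
  i : ι
  j : ι
  wait : FixedInterval s

/-- The event with renamed balls. -/
def Event.map {κ : Type*} (g : ι → κ) (e : Event s ι) : Event s κ := ⟨g e.i, g e.j, e.wait⟩

variable {b : ι → PhaseBox s d} {last : Option (Sym2 ι)} {e : Event s ι}
  {x v : ι → EuclideanSpace ℝ (Fin d)} {k l : ι} {r τ : ℝ}

/-- The enclosures `b` guarantee that the balls `k` and `l` never touch from now on. The pair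
`last` has just collided: it is known to move apart, but not to be at a distance above `2`. -/
abbrev NeverMeet (b : ι → PhaseBox s d) (last : Option (Sym2 ι)) (k l : ι) : Prop :=
  last = some s(k, l) ∨ (b k - b l).Recedes ∨ (b k - b l).Misses

/-- The enclosures `b` guarantee that the next collision is `e`, where `last` is the pair that has
just collided. -/
def Event.Occurs (e : Event s ι) (b : ι → PhaseBox s d) (last : Option (Sym2 ι)) : Prop :=
  e.i ≠ e.j ∧ (b e.i - b e.j).Meets e.wait ∧ ∀ k l, k ≠ l → s(k, l) ≠ s(e.i, e.j) →
    ((b k - b l).advance e.wait).Approaches ∨ NeverMeet b last k l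

theorem NeverMeet.two_lt_norm_add_smul (h : NeverMeet b last k l)
    (hb : ∀ k, (b k).Encloses (x k) (v k)) (hkl : 2 ≤ ‖x k - x l‖)
    (hlast : last = some s(k, l) → 0 < ⟪x k - x l, v k - v l⟫) (hr : 0 < r) :
    2 < ‖(x k - x l) + r • (v k - v l)‖ := by
  have ha := (hb k).sub (hb l)
  rcases h with h | h | h
  · exact hkl.trans_lt (norm_lt_norm_add_smul (hlast h) hr)
  · exact hkl.trans_lt (norm_lt_norm_add_smul (ha.inner_pos_of_recedes h) hr)
  · exact ha.two_lt_norm_add_smul_of_misses h r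

theorem Event.Occurs.two_lt_norm_add_smul (h : e.Occurs b last)
    (hb : ∀ k, (b k).Encloses (x k) (v k)) (hx : Separated x)
    (hlast : ∀ k l, last = some s(k, l) → 0 < ⟪x k - x l, v k - v l⟫) (hτ : τ ∈ e.wait)
    (hkl : k ≠ l) (hne : s(k, l) ≠ s(e.i, e.j)) (hr : r ∈ Ioc 0 τ) :
    2 < ‖(x k - x l) + r • (v k - v l)‖ := by
  rcases h.2.2 k l hkl hne with h | h
  · exact (((hb k).sub (hb l)).advance hτ).two_lt_norm_add_smul_of_approaches h hr.2
  · exact h.two_lt_norm_add_smul hb (hx hkl) (hlast k l) hr.1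

theorem separated_add_smul_of_neverMeet (h : ∀ k l, k ≠ l → NeverMeet b last k l)
    (hb : ∀ k, (b k).Encloses (x k) (v k)) (hx : Separated x)
    (hlast : ∀ k l, last = some s(k, l) → 0 < ⟪x k - x l, v k - v l⟫) (hr : 0 ≤ r) :
    Separated (x + r • v) := by
  intro k l hkl
  obtain rfl | hr₀ := hr.eq_or_lt
  · simpa only [zero_smul, add_zero] using hx hkl
  · rw [add_smul_sub_add_smul]
    exact ((h k l hkl).two_lt_norm_add_smul hb (hx hkl) (hlast k l) hr₀).le

instance [Fintype ι] [DecidableEq ι] (e : Event s ι) (b : ι → PhaseBox s d)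
    (last : Option (Sym2 ι)) : Decidable (e.Occurs b last) :=
  inferInstanceAs (Decidable (_ ∧ _ ∧ _))

variable [DecidableEq ι]

/-- The enclosures after an elastic collision of `i` and `j`. -/
def collide (i j : ι) (b : ι → PhaseBox s d) : ι → PhaseBox s d := fun k ↦
  if k = i then ⟨(b i).pos, (b i).vel - (b i - b j).impulse⟩
  else if k = j then ⟨(b j).pos, (b j).vel + (b i - b j).impulse⟩
  else b k

theorem collide_encloses_elasticUpdate (i j : ι) (hb : ∀ k, (b k).Encloses (x k) (v k)) (k : ι) :
    (collide i j b k).Encloses (x k) (elasticUpdate i j x v k) := by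
  have himpulse := ((hb i).sub (hb j)).elasticImpulse_mem
  unfold collide elasticUpdate
  split_ifs with hi hj
  · subst hi
    exact ⟨(hb k).1, fun m ↦ FixedInterval.sub_mem ((hb k).2 m) (himpulse m)⟩
  · subst hj
    exact ⟨(hb k).1, fun m ↦ FixedInterval.add_mem ((hb k).2 m) (himpulse m)⟩
  · exact hb k

/-- The enclosures immediately after `e`, from those at the start of its waiting time. -/
def Event.next (e : Event s ι) (b : ι → PhaseBox s d) : ι → PhaseBox s d :=
  collide e.i e.j fun k ↦ (b k).advance e.wait

/-- The enclosures `b` guarantee that the listed events are the next collisions and that there is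
no further one, where `last` is the pair that has just collided. -/
def Predicts (b : ι → PhaseBox s d) (last : Option (Sym2 ι)) : List (Event s ι) → Prop
  | [] => ∀ k l, k ≠ l → NeverMeet b last k l
  | e :: es => e.Occurs b last ∧ Predicts (e.next b) (some s(e.i, e.j)) es

instance decidablePredicts [Fintype ι] : (b : ι → PhaseBox s d) → (last : Option (Sym2 ι)) →
    (es : List (Event s ι)) → Decidable (Predicts b last es)
  | b, last, [] => inferInstanceAs (Decidable (∀ k l, k ≠ l → NeverMeet b last k l))
  | b, _, e :: es =>
      letI := decidablePredicts (e.next b) (some s(e.i, e.j)) es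
      inferInstanceAs (Decidable (_ ∧ _))

end Prediction

section Realization

variable {ι : Type} [DecidableEq ι] {s d : ℕ} {b : ι → PhaseBox s d} {last : Option (Sym2 ι)}
  {es : List (Event s ι)} {x v : ι → EuclideanSpace ℝ (Fin d)} {t₀ : ℝ}

theorem Predicts.hasContinuation [NeZero s] (h : Predicts b last es)
    (hb : ∀ k, (b k).Encloses (x k) (v k)) (hx : Separated x)
    (hlast : ∀ k l, last = some s(k, l) → 0 < ⟪x k - x l, v k - v l⟫) :
    HasContinuation x v t₀ es.length := by
  induction es generalizing b last x v t₀ with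
  | nil => exact .of_separated fun _ hr ↦ separated_add_smul_of_neverMeet h hb hx hlast hr
  | cons e es ih =>
    obtain ⟨hoccurs, hnext⟩ := h
    have hij := hoccurs.1
    obtain ⟨τ, hτ, hτ₀, htouch, happroach⟩ :=
      ((hb e.i).sub (hb e.j)).exists_contact_of_meets hoccurs.2.1
    have hclear : ∀ k l, k ≠ l → s(k, l) ≠ s(e.i, e.j) →
        ∀ r ∈ Ioc 0 τ, 2 < ‖(x k - x l) + r • (v k - v l)‖ :=
      fun k l hkl hne r ↦ hoccurs.two_lt_norm_add_smul hb hx hlast hτ hkl hne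
    refine .of_collision hij hτ₀ ?_ hx htouch happroach hclear
    refine ih hnext (collide_encloses_elasticUpdate e.i e.j fun k ↦ (hb k).advance hτ)
      (separated_add_smul_of_collision hx htouch happroach.le hclear τ ⟨hτ₀.le, le_rfl⟩) ?_
    intro k l hkl
    rw [← add_smul_sub_add_smul] at htouch happroach
    have hinner := inner_elasticUpdate_sub (x := x + τ • v) (v := v) hij htouch
    obtain ⟨rfl, rfl⟩ | ⟨rfl, rfl⟩ := Sym2.eq_iff.1 (Option.some.inj hkl)
    · rw [hinner]
      exact neg_pos.2 happroach
    · rw [← inner_neg_neg, neg_sub, neg_sub, hinner]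
      exact neg_pos.2 happroach

theorem exists_ballSystem_of_predicts [NeZero s]
    (hpast : ∀ k l, k ≠ l → (b k - b l).Approaches ∨ (b k - b l).Misses)
    (h : Predicts b none es) :
    ∃ S : BallSystem ι d univ, (es.length : ℕ∞) ≤ S.collisions.encard := by
  choose x v hb using fun k ↦ (b k).exists_encloses
  have hsep : ∀ r ≤ (0 : ℝ), Separated (x + r • v) := by
    intro r hr k l hkl
    rw [add_smul_sub_add_smul]
    have ha := (hb k).sub (hb l)
    rcases hpast k l hkl with h | h
    · rw [← add_zero (x k - x l), ← zero_smul ℝ (v k - v l)] at ha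
      exact (ha.two_lt_norm_add_smul_of_approaches h hr).le
    · exact (ha.two_lt_norm_add_smul_of_misses h r).le
  have hx : Separated x := by simpa using hsep 0 le_rfl
  exact (h.hasContinuation hb hx fun _ _ h ↦ nomatch h).exists_ballSystem_univ hsep

end Realization

section Data

/-- Forty decimal places. They are needed because each collision multiplies the width of the
enclosures by a large factor. -/
abbrev scale : ℕ := 10 ^ 40

/-- Positions and velocities of six balls in the plane, with twelve decimals; the first `n` of the
balls are used for the systems of `n` balls. -/
def initialBoxes (k : Fin 6) : PhaseBox scale 2 where
  pos m := ⟨10 ^ 28 * ![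
    ![0, 0],
    ![2957049415311, 0],
    ![-1884576463193, 955106734206],
    ![-71704532247851, -144521441339242],
    ![-1066529091985370, -2862547125240383],
    ![-1415347046547079, -40742072300847583]] k m, 0⟩
  vel m := ⟨10 ^ 28 * ![
    ![0, 0],
    ![-1638814472085, 770532252355],
    ![632648879855, 502168745984],
    ![2627320197157, 6473497978538],
    ![34271217735724, 93855134220534],
    ![43911822718853, 1293506959556370]] k m, 0⟩

/-- The collisions of the first four balls in order of time. The contact times are rounded to the
digits shown, with an error of at most one unit of the last digit. -/
def fourBallEvents : List (Event scale (Fin 4)) :=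
  [⟨0, 2, 3979262720214176649657089405100467444 * 10 ^ 3, 10 ^ 3⟩,
    ⟨0, 1, 20021374223756157149737905788542897 * 10 ^ 5, 10 ^ 5⟩,
    ⟨0, 2, 955318017845063820210932003521092 * 10 ^ 6, 10 ^ 6⟩,
    ⟨1, 2, 54313268893876685992658684167592 * 10 ^ 9, 10 ^ 9⟩,
    ⟨0, 3, 13517235022905843911530427597862 * 10 ^ 10, 10 ^ 10⟩,
    ⟨0, 2, 5864705500251200243610310339 * 10 ^ 13, 10 ^ 13⟩,
    ⟨1, 2, 10972557187895863052514634 * 10 ^ 15, 10 ^ 15⟩]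

/-- The collisions of the first five balls: the fifth one interferes only after those of the
first four. -/
def fiveBallEvents : List (Event scale (Fin 5)) :=
  fourBallEvents.map (Event.map Fin.castSucc) ++
  [⟨3, 4, 3598367020416896565882145 * 10 ^ 16, 10 ^ 16⟩,
    ⟨0, 3, 5919309651943310025752 * 10 ^ 18, 10 ^ 18⟩,
    ⟨0, 2, 1318885242826728270 * 10 ^ 21, 10 ^ 21⟩,
    ⟨1, 2, 5381945937367394 * 10 ^ 24, 10 ^ 24⟩]

/-- The collisions of all six balls: the last one interferes only after those of the other five. -/
def sixBallEvents : List (Event scale (Fin 6)) :=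
  fiveBallEvents.map (Event.map Fin.castSucc) ++
  [⟨4, 5, 8953225207491 * 10 ^ 25, 10 ^ 25⟩,
    ⟨3, 4, 498125790102 * 10 ^ 27, 10 ^ 27⟩,
    ⟨1, 3, 649898616 * 10 ^ 30, 10 ^ 30⟩,
    ⟨1, 2, 237186 * 10 ^ 33, 10 ^ 33⟩,
    ⟨0, 2, 6842 * 10 ^ 36, 10 ^ 36⟩]

theorem initialBoxes_approach_or_miss : ∀ k l, k ≠ l →
    (initialBoxes k - initialBoxes l).Approaches ∨ (initialBoxes k - initialBoxes l).Misses := by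
  decide +kernel

theorem predicts_fourBallEvents :
    Predicts (fun k : Fin 4 ↦ initialBoxes (k.castLE (by decide))) none fourBallEvents := by
  decide +kernel

theorem predicts_fiveBallEvents :
    Predicts (fun k : Fin 5 ↦ initialBoxes (k.castLE (by decide))) none fiveBallEvents := by
  decide +kernel

theorem predicts_sixBallEvents :
    Predicts (fun k : Fin 6 ↦ initialBoxes (k.castLE le_rfl)) none sixBallEvents := by
  decide +kernel

theorem exists_ballSystem_of_predicts_initialBoxes {n : ℕ} (hn : n ≤ 6)
    {es : List (Event scale (Fin n))}
    (h : Predicts (fun k ↦ initialBoxes (Fin.castLE hn k)) none es) :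
    ∃ S : BallSystem (Fin n) 2 univ, (es.length : ℕ∞) ≤ S.collisions.encard :=
  exists_ballSystem_of_predicts (fun _ _ hkl ↦ initialBoxes_approach_or_miss _ _
    ((Fin.castLE_injective hn).ne hkl)) h

end Data

theorem exists_linearIsometry_of_finrank_le {V W : Type*} [NormedAddCommGroup V]
    [InnerProductSpace ℝ V] [FiniteDimensional ℝ V] [NormedAddCommGroup W]
    [InnerProductSpace ℝ W] [FiniteDimensional ℝ W]
    (h : Module.finrank ℝ V ≤ Module.finrank ℝ W) : Nonempty (V →ₗᵢ[ℝ] W) := by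
  let B := stdOrthonormalBasis ℝ V
  let g := stdOrthonormalBasis ℝ W ∘ Fin.castLE h
  have hg : Orthonormal ℝ g :=
    (stdOrthonormalBasis ℝ W).orthonormal.comp _ (Fin.castLE_injective h)
  have hB : Orthonormal ℝ B.toBasis := by
    rw [B.coe_toBasis]
    exact B.orthonormal
  have hcomp : B.toBasis.constr ℝ g ∘ B.toBasis = g := funext (B.toBasis.constr_basis ℝ g)
  exact ⟨(B.toBasis.constr ℝ g).isometryOfOrthonormal hB (by rwa [hcomp])⟩

theorem exists_finset_subset_of_le_encard {α : Type*} {s : Set α} {N : ℕ} (h : N ≤ s.encard) :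
    ∃ F : Finset α, ↑F ⊆ s ∧ F.card = N := by
  obtain ⟨t, hts, ht⟩ := exists_subset_encard_eq h
  have htfin : t.Finite := finite_of_encard_eq_coe ht
  refine ⟨htfin.toFinset, by rwa [htfin.coe_toFinset], ?_⟩
  rwa [htfin.encard_eq_coe_toFinset_card, Nat.cast_inj] at ht

/-- For every `4 ≤ n ≤ 6` and `d ≥ 2` there is an elastic collision
system of `n` unit balls in `ℝ^d`, on the time interval `ℝ`, with at least
`1 + n(n-1)/2` collisions. -/
theorem ball_collisions_ge_one_add (n d : ℕ) (hn4 : 4 ≤ n) (hn6 : n ≤ 6) (hd : 2 ≤ d) :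
    ∃ S : BallSystem (Fin n) d Set.univ, ∃ F : Finset (ℝ × Finset (Fin n)),
      ↑F ⊆ S.collisions ∧ 1 + n * (n - 1) / 2 ≤ F.card := by
  obtain ⟨S, hS⟩ : ∃ S : BallSystem (Fin n) 2 univ,
      ((1 + n * (n - 1) / 2 : ℕ) : ℕ∞) ≤ S.collisions.encard := by
    interval_cases n
    · exact exists_ballSystem_of_predicts_initialBoxes _ predicts_fourBallEvents
    · exact exists_ballSystem_of_predicts_initialBoxes _ predicts_fiveBallEvents
    · exact exists_ballSystem_of_predicts_initialBoxes _ predicts_sixBallEvents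
  obtain ⟨F, hF, hcard⟩ := exists_finset_subset_of_le_encard hS
  obtain ⟨L⟩ : Nonempty (EuclideanSpace ℝ (Fin 2) →ₗᵢ[ℝ] EuclideanSpace ℝ (Fin d)) :=
    exists_linearIsometry_of_finrank_le (by simpa using hd)
  exact ⟨S.map L, F, by rwa [S.collisions_map], hcard.ge⟩
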